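/- Let l_1,…,l_n and r_1,…,r_n be d-dimensional bit vectors and let ℓ ≥ 1, p ∈ {0,1}, q ≥ 0 be integers, and let G = G_{L,R,ℓ,p,q}. For every 1 ≤ i ≤ n, dist_G(u_i^L, y^L) = 3ℓ − 2p and dist_G(u_i^R, y^R) = 3ℓ − 2p. -/

import Mathlib

namespace GraphOV

/-- Two bit vectors (functions into `Fin 2`) are orthogonal if in every coordinate
at least one of them is `0`. -/
def Orth {d : ℕ} (a b : Fin d → Fin 2) : Prop := ∀ k, a k = 0 ∨ b k = 0

/-- A system of internally disjoint paths joining exterior vertices from `E`: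
for each path name `i : ι` we record its two endpoints and its length. -/
structure PathSys (E : Type) (ι : Type) where
  src : ι → E
  dst : ι → E
  len : ι → ℕ

namespace PathSys

variable {E ι : Type}

/-- Endpoints of zero-length paths get identified. -/
def idRel (S : PathSys E ι) (a b : E) : Prop :=
  ∃ i, S.len i = 0 ∧ S.src i = a ∧ S.dst i = b

/-- Vertices of the glued graph: exterior vertices (up to identification) together
with, for each path of length `m`, fresh interior vertices at positions `1,…,m-1`. -/
def Vert (S : PathSys E ι) : Type :=
  Quot S.idRel ⊕ Σ i : ι, {t : ℕ // 0 < t ∧ t < S.len i}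

/-- The vertex corresponding to an exterior vertex. -/
def ext (S : PathSys E ι) (a : E) : S.Vert := Sum.inl (Quot.mk _ a)

/-- The `t`-th vertex on the path named `i` (for `0 ≤ t ≤ S.len i`). -/
def pt (S : PathSys E ι) (i : ι) (t : ℕ) : S.Vert :=
  if h : 0 < t ∧ t < S.len i then Sum.inr ⟨i, t, h⟩
  else if t = 0 then S.ext (S.src i) else S.ext (S.dst i)

/-- The glued graph: consecutive vertices on each path are adjacent. -/
def graph (S : PathSys E ι) : SimpleGraph S.Vert :=
  SimpleGraph.fromRel fun a b =>
    ∃ i t, t + 1 ≤ S.len i ∧ a = S.pt i t ∧ b = S.pt i (t + 1)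

/-- The set of vertices lying on the path named `i`. -/
def onPath (S : PathSys E ι) (i : ι) : Set S.Vert :=
  {v | ∃ t ≤ S.len i, v = S.pt i t}

/-- A walk in the glued graph contains the path named `i` entirely if all vertices of
that path occur consecutively (in forward or backward order) on the walk. -/
def WalkContainsPath (S : PathSys E ι) {x y : S.Vert} (W : S.graph.Walk x y) (i : ι) : Prop :=
  ∃ a, a + S.len i ≤ W.length ∧
    ((∀ t ≤ S.len i, W.getVert (a + t) = S.pt i t) ∨
     (∀ t ≤ S.len i, W.getVert (a + t) = S.pt i (S.len i - t)))

end PathSys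

/-- The exterior vertices of the graph `G_{L,R,ℓ,p,q}`. -/
inductive Ext (n d : ℕ) : Type
  | uL : Fin n → Ext n d
  | uR : Fin n → Ext n d
  | vL : Fin n → Ext n d
  | vR : Fin n → Ext n d
  | wL : Fin d → Ext n d
  | wR : Fin d → Ext n d
  | xL : Ext n d
  | xR : Ext n d
  | yL : Ext n d
  | yR : Ext n d

/-- Names for the paths of the graph `G_{L,R,ℓ,p,q}`. -/
inductive Idx (n d : ℕ) (l r : Fin n → Fin d → Fin 2) : Type
  | uvL : Fin n → Idx n d l r
  | uvR : Fin n → Idx n d l r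
  | vxL : Fin n → Idx n d l r
  | vxR : Fin n → Idx n d l r
  | vwL : (i : Fin n) → (k : Fin d) → l i k = 1 → Idx n d l r
  | vwR : (j : Fin n) → (k : Fin d) → r j k = 1 → Idx n d l r
  | ywL : Fin d → Idx n d l r
  | ywR : Fin d → Idx n d l r
  | ww : Fin d → Idx n d l r
  | xyL : Idx n d l r
  | xyR : Idx n d l r
  | yy : Idx n d l r

/-- The path system defining the graph `G_{L,R,ℓ,p,q}`. -/
def sys (n d : ℕ) (l r : Fin n → Fin d → Fin 2) (ℓ p q : ℕ) :
    PathSys (Ext n d) (Idx n d l r) where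
  src := fun i => match i with
    | .uvL i => .uL i
    | .uvR i => .uR i
    | .vxL i => .vL i
    | .vxR i => .vR i
    | .vwL i _ _ => .vL i
    | .vwR j _ _ => .vR j
    | .ywL _ => .yL
    | .ywR _ => .yR
    | .ww k => .wL k
    | .xyL => .xL
    | .xyR => .xR
    | .yy => .yL
  dst := fun i => match i with
    | .uvL i => .vL i
    | .uvR i => .vR i
    | .vxL _ => .xL
    | .vxR _ => .xR
    | .vwL _ k _ => .wL k
    | .vwR _ k _ => .wR k
    | .ywL k => .wL k
    | .ywR k => .wR k
    | .ww k => .wR k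
    | .xyL => .yL
    | .xyR => .yR
    | .yy => .yR
  len := fun i => match i with
    | .uvL _ => ℓ - p
    | .uvR _ => ℓ - p
    | .vxL _ => ℓ
    | .vxR _ => ℓ
    | .vwL _ _ _ => ℓ
    | .vwR _ _ _ => ℓ
    | .ywL _ => ℓ
    | .ywR _ => ℓ
    | .ww _ => q
    | .xyL => ℓ - p
    | .xyR => ℓ - p
    | .yy => p + q

/-- The set `P_i^L`. -/
def PL (n d : ℕ) (l r : Fin n → Fin d → Fin 2) (ℓ p q : ℕ) (i : Fin n) :
    Set (sys n d l r ℓ p q).Vert :=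
  (sys n d l r ℓ p q).onPath (.uvL i) ∪
    ((sys n d l r ℓ p q).onPath (.vxL i) \ {(sys n d l r ℓ p q).ext .xL}) ∪
    ⋃ (k : Fin d) (h : l i k = 1),
      ((sys n d l r ℓ p q).onPath (.vwL i k h) \ {(sys n d l r ℓ p q).ext (.wL k)})

/-- The set `P_j^R`. -/
def PR (n d : ℕ) (l r : Fin n → Fin d → Fin 2) (ℓ p q : ℕ) (j : Fin n) :
    Set (sys n d l r ℓ p q).Vert :=
  (sys n d l r ℓ p q).onPath (.uvR j) ∪
    ((sys n d l r ℓ p q).onPath (.vxR j) \ {(sys n d l r ℓ p q).ext .xR}) ∪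
    ⋃ (k : Fin d) (h : r j k = 1),
      ((sys n d l r ℓ p q).onPath (.vwR j k h) \ {(sys n d l r ℓ p q).ext (.wR k)})

/-- The set `V^L`. -/
def VL (n d : ℕ) (l r : Fin n → Fin d → Fin 2) (ℓ p q : ℕ) :
    Set (sys n d l r ℓ p q).Vert := ⋃ i : Fin n, PL n d l r ℓ p q i

/-- The set `V^R`. -/
def VR (n d : ℕ) (l r : Fin n → Fin d → Fin 2) (ℓ p q : ℕ) :
    Set (sys n d l r ℓ p q).Vert := ⋃ j : Fin n, PR n d l r ℓ p q j

/-- The set `V^M` of all remaining vertices. -/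
def VM (n d : ℕ) (l r : Fin n → Fin d → Fin 2) (ℓ p q : ℕ) :
    Set (sys n d l r ℓ p q).Vert := (VL n d l r ℓ p q ∪ VR n d l r ℓ p q)ᶜ

/-!
The walk `u → v → x → y` has length `(ℓ - p) + ℓ + (ℓ - p)`. For the lower bound, consider the
distance to the nearer of `y^L` and `y^R`. Its values on the exterior vertices can be guessed, and
they certify themselves: a function on the exterior vertices that changes by at most the length of
each path extends to all vertices so that it changes by at most one along each edge, so its
differences bound distances from below. Since both `y`s have the value `0`, the paths between the
left and the right half offer no shortcut.
-/

section LowerBound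

variable {V : Type*} {G : SimpleGraph V} {f : V → ℕ}

theorem le_add_walk_length_of_forall_adj (hf : ∀ ⦃a b⦄, G.Adj a b → f a ≤ f b + 1) {a b : V}
    (W : G.Walk a b) : f a ≤ f b + W.length := by
  induction W with
  | nil => exact le_rfl
  | cons hadj W ih =>
    rw [SimpleGraph.Walk.length_cons]
    linarith [hf hadj]

theorem le_add_edist_of_forall_adj (hf : ∀ ⦃a b⦄, G.Adj a b → f a ≤ f b + 1) (a b : V) :
    (f a : ℕ∞) ≤ f b + G.edist a b := by
  rcases eq_or_ne (G.edist a b) ⊤ with htop | htop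
  · simp only [htop, add_top, le_top]
  · obtain ⟨W, hW⟩ := G.exists_walk_of_edist_ne_top htop
    rw [← hW]
    exact_mod_cast le_add_walk_length_of_forall_adj hf W

end LowerBound

namespace PathSys

variable {E ι : Type} {S : PathSys E ι}

theorem pt_zero (S : PathSys E ι) (i : ι) : S.pt i 0 = S.ext (S.src i) := by
  simp [pt]

theorem pt_len (S : PathSys E ι) (i : ι) : S.pt i (S.len i) = S.ext (S.dst i) := by
  by_cases h : S.len i = 0
  · rw [h, pt_zero]
    exact congrArg Sum.inl (Quot.sound ⟨i, h, rfl, rfl⟩)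
  · simp [pt, h]

theorem pt_of_pos_of_lt {i : ι} {t : ℕ} (hpos : 0 < t) (hlt : t < S.len i) :
    S.pt i t = Sum.inr ⟨i, t, hpos, hlt⟩ :=
  dif_pos ⟨hpos, hlt⟩

theorem edist_pt_succ_le {i : ι} {t : ℕ} (ht : t < S.len i) :
    S.graph.edist (S.pt i t) (S.pt i (t + 1)) ≤ 1 := by
  rw [SimpleGraph.edist_le_one_iff_adj_or_eq, graph, SimpleGraph.fromRel_adj]
  by_cases h : S.pt i t = S.pt i (t + 1)
  · exact Or.inr h
  · exact Or.inl ⟨h, Or.inl ⟨i, t, ht, rfl, rfl⟩⟩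

theorem edist_src_pt_le {i : ι} {t : ℕ} (ht : t ≤ S.len i) :
    S.graph.edist (S.ext (S.src i)) (S.pt i t) ≤ t := by
  induction t with
  | zero => simp [pt_zero]
  | succ t ih =>
    calc S.graph.edist (S.ext (S.src i)) (S.pt i (t + 1))
        ≤ S.graph.edist (S.ext (S.src i)) (S.pt i t)
            + S.graph.edist (S.pt i t) (S.pt i (t + 1)) := SimpleGraph.edist_triangle
      _ ≤ t + 1 := add_le_add (ih (Nat.le_of_succ_le ht)) (edist_pt_succ_le ht)
      _ = ((t + 1 : ℕ) : ℕ∞) := (Nat.cast_succ t).symm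

theorem edist_src_dst_le (S : PathSys E ι) (i : ι) :
    S.graph.edist (S.ext (S.src i)) (S.ext (S.dst i)) ≤ S.len i :=
  S.pt_len i ▸ edist_src_pt_le le_rfl

theorem edist_src_dst_le_of_chain (S : PathSys E ι) (i j k : ι) (hij : S.dst i = S.src j)
    (hjk : S.dst j = S.src k) :
    S.graph.edist (S.ext (S.src i)) (S.ext (S.dst k)) ≤
      (S.len i + S.len j + S.len k : ℕ) := by
  have hj := S.edist_src_dst_le j
  have hk := S.edist_src_dst_le k
  rw [← hij] at hj
  rw [← hjk] at hk
  push_cast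
  calc S.graph.edist (S.ext (S.src i)) (S.ext (S.dst k))
      ≤ S.graph.edist (S.ext (S.src i)) (S.ext (S.dst j))
          + S.graph.edist (S.ext (S.dst j)) (S.ext (S.dst k)) := SimpleGraph.edist_triangle
    _ ≤ S.graph.edist (S.ext (S.src i)) (S.ext (S.dst i))
          + S.graph.edist (S.ext (S.dst i)) (S.ext (S.dst j))
          + S.graph.edist (S.ext (S.dst j)) (S.ext (S.dst k)) := by
        gcongr
        exact SimpleGraph.edist_triangle
    _ ≤ S.len i + S.len j + S.len k := by
        gcongr
        exact S.edist_src_dst_le i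

/-- A potential of a path system: a function on the exterior vertices whose values at the two ends
of each path differ by at most the length of the path. Differences of its values bound distances in
the glued graph from below. The two inequalities express `|f (src i) - f (dst i)| ≤ len i` without
subtraction in `ℕ`. -/
structure IsPotential (S : PathSys E ι) (f : E → ℕ) : Prop where
  src_le : ∀ i, f (S.src i) ≤ f (S.dst i) + S.len i
  dst_le : ∀ i, f (S.dst i) ≤ f (S.src i) + S.len i

namespace IsPotential

variable {f : E → ℕ}

theorem eq_of_idRel (hf : S.IsPotential f) {a b : E} (hab : S.idRel a b) : f a = f b := by
  obtain ⟨i, hi, rfl, rfl⟩ := hab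
  have hsrc := hf.src_le i
  have hdst := hf.dst_le i
  omega

/-- The extension of a potential to all vertices of the glued graph. Inside a path it is the largest
function with the given end values that grows by at most one per step away from either end. -/
def extend (hf : S.IsPotential f) : S.Vert → ℕ
  | Sum.inl a => Quot.lift f (fun _ _ => hf.eq_of_idRel) a
  | Sum.inr ⟨i, t, _⟩ => min (f (S.src i) + t) (f (S.dst i) + (S.len i - t))

theorem extend_ext (hf : S.IsPotential f) (a : E) : hf.extend (S.ext a) = f a := rfl

theorem extend_pt (hf : S.IsPotential f) {i : ι} {t : ℕ} (ht : t ≤ S.len i) :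
    hf.extend (S.pt i t) = min (f (S.src i) + t) (f (S.dst i) + (S.len i - t)) := by
  have hsrc := hf.src_le i
  have hdst := hf.dst_le i
  rcases t.eq_zero_or_pos with rfl | hpos
  · rw [pt_zero, extend_ext]
    omega
  rcases ht.eq_or_lt with rfl | hlt
  · rw [pt_len, extend_ext]
    omega
  · rw [pt_of_pos_of_lt hpos hlt]
    rfl

theorem extend_le_of_adj (hf : S.IsPotential f) ⦃a b : S.Vert⦄ (hab : S.graph.Adj a b) :
    hf.extend a ≤ hf.extend b + 1 := by
  rw [graph, SimpleGraph.fromRel_adj] at hab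
  obtain ⟨-, ⟨i, t, ht, rfl, rfl⟩ | ⟨i, t, ht, rfl, rfl⟩⟩ := hab <;>
  · rw [hf.extend_pt ht, hf.extend_pt (Nat.le_of_succ_le ht)]
    omega

theorem le_add_edist_ext (hf : S.IsPotential f) (a b : E) :
    (f a : ℕ∞) ≤ f b + S.graph.edist (S.ext a) (S.ext b) :=
  le_add_edist_of_forall_adj hf.extend_le_of_adj (S.ext a) (S.ext b)

theorem dist_ext_eq (hf : S.IsPotential f) {a b : E} {m : ℕ}
    (hle : S.graph.edist (S.ext a) (S.ext b) ≤ m) (hm : f a = f b + m) :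
    S.graph.dist (S.ext a) (S.ext b) = m := by
  have hge : (m : ℕ∞) ≤ S.graph.edist (S.ext a) (S.ext b) := by
    have h := hf.le_add_edist_ext a b
    rw [hm, Nat.cast_add] at h
    exact (ENat.add_le_add_iff_left (ENat.natCast_ne_top _)).mp h
  rw [SimpleGraph.dist, le_antisymm hle hge, ENat.toNat_natCast]

end IsPotential

end PathSys

/-- The distance from each exterior vertex of `G_{L,R,ℓ,p,q}` to the nearer of `y^L` and `y^R`,
used as a potential. -/
def distToY (n d ℓ p : ℕ) : Ext n d → ℕ
  | .uL _ | .uR _ => (ℓ - p) + ℓ + (ℓ - p)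
  | .vL _ | .vR _ => ℓ + (ℓ - p)
  | .wL _ | .wR _ => ℓ
  | .xL | .xR => ℓ - p
  | .yL | .yR => 0

theorem isPotential_distToY (n d ℓ p q : ℕ) (l r : Fin n → Fin d → Fin 2) :
    (sys n d l r ℓ p q).IsPotential (distToY n d ℓ p) where
  src_le i := by cases i <;> simp only [sys, distToY] <;> omega
  dst_le i := by cases i <;> simp only [sys, distToY] <;> omega

theorem dist_u_to_y_general (n d ℓ p q : ℕ) (hp : p ≤ ℓ) (l r : Fin n → Fin d → Fin 2)
    (i : Fin n) :
    (sys n d l r ℓ p q).graph.dist ((sys n d l r ℓ p q).ext (.uL i))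
      ((sys n d l r ℓ p q).ext .yL) = 3 * ℓ - 2 * p ∧
    (sys n d l r ℓ p q).graph.dist ((sys n d l r ℓ p q).ext (.uR i))
      ((sys n d l r ℓ p q).ext .yR) = 3 * ℓ - 2 * p := by
  have hlen : 3 * ℓ - 2 * p = (ℓ - p) + ℓ + (ℓ - p) := by omega
  have hpot := isPotential_distToY n d ℓ p q l r
  rw [hlen]
  constructor
  · exact hpot.dist_ext_eq
      ((sys n d l r ℓ p q).edist_src_dst_le_of_chain (.uvL i) (.vxL i) .xyL rfl rfl)
      (Nat.zero_add _).symm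
  · exact hpot.dist_ext_eq
      ((sys n d l r ℓ p q).edist_src_dst_le_of_chain (.uvR i) (.vxR i) .xyR rfl rfl)
      (Nat.zero_add _).symm

theorem dist_u_to_y (n d ℓ p q : ℕ) (hn : 1 ≤ n) (hd : 1 ≤ d) (hℓ : 1 ≤ ℓ)
    (hp : p ≤ 1) (l r : Fin n → Fin d → Fin 2) :
    ∀ i : Fin n,
      (sys n d l r ℓ p q).graph.dist ((sys n d l r ℓ p q).ext (.uL i))
        ((sys n d l r ℓ p q).ext .yL) = 3 * ℓ - 2 * p ∧
      (sys n d l r ℓ p q).graph.dist ((sys n d l r ℓ p q).ext (.uR i))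
        ((sys n d l r ℓ p q).ext .yR) = 3 * ℓ - 2 * p :=
  dist_u_to_y_general n d ℓ p q (hp.trans hℓ) l r

end GraphOV
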